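/- arXiv:2008.02008 — 3 statements merged into one kernel-verified Lean document; each statement's English description precedes it below -/
import Mathlib

section
/- Let k be a positive integer and α_1, ..., α_k positive reals. Then there exist a positive integer m and a set A ⊂ R with |A| = m+1 such that for every positive integer n, every subset B ⊆ A^n with |B| > m^n contains k+1 points y^0, ..., y^k with ‖y^s - y^t‖_∞ = α_{s+1} + ... + α_t for all 0 ≤ s < t ≤ k (an isometric copy of the baton B(α_1,...,α_k) in the max metric). -/
theorem baton_core (m k : ℕ) (a : Fin (m+1) → ℝ) (δ : ℝ)
    (gap : ∀ j : Fin m, |a j.castSucc - a j.succ| ≤ δ) (hδ : 0 ≤ δ)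
    (σ : Fin (k+1) → Fin (m+1))
    (hD : ∀ s t, s < t → δ ≤ |a (σ s) - a (σ t)|) :
    ∀ n : ℕ, ∀ B : Finset (Fin n → Fin (m+1)), m ^ n < B.card →
      ∃ y : Fin (k+1) → Fin n → Fin (m+1), (∀ s, y s ∈ B) ∧
        ∀ s t, s < t → (∀ i, |a (y s i) - a (y t i)| ≤ |a (σ s) - a (σ t)|) ∧
          ∃ i, |a (y s i) - a (y t i)| = |a (σ s) - a (σ t)| := by
  intro n
  induction n with
  | zero =>
    intro B hB
    have := Finset.card_le_univ B
    simp at this hB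
    omega
  | succ n ih =>
    intro B hB
    by_cases hfull : ∃ x : Fin n → Fin (m+1), ∀ p : Fin (m+1), (Fin.cons p x : Fin (n+1) → Fin (m+1)) ∈ B
    · obtain ⟨x, hx⟩ := hfull
      refine ⟨fun s => Fin.cons (σ s) x, fun s => hx _, fun s t _ => ⟨?_, 0, by simp⟩⟩
      intro i
      refine Fin.cases ?_ (fun i => ?_) i <;> simp
    · push Not at hfull
      choose p hp using hfull
      let F : Fin m → (Fin n → Fin (m+1)) → (Fin (n+1) → Fin (m+1)) :=
        fun j x => Fin.cons ((p x).succAbove j) x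
      let C : Fin m → Finset (Fin n → Fin (m+1)) :=
        fun j => Finset.univ.filter (fun x => F j x ∈ B)
      have hsub : B ⊆ Finset.univ.biUnion (fun j => (C j).image (F j)) := by
        intro z hz
        have hne : z 0 ≠ p (Fin.tail z) := by
          intro h
          apply hp (Fin.tail z)
          rw [← h, Fin.cons_self_tail]
          exact hz
        obtain ⟨j, hj⟩ := Fin.exists_succAbove_eq hne
        have hF : F j (Fin.tail z) = z := by
          simp only [F]
          rw [hj, Fin.cons_self_tail]
        simp only [Finset.mem_biUnion, Finset.mem_image, Finset.mem_univ, true_and]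
        exact ⟨j, Fin.tail z, by simp [C, hF, hz], hF⟩
      have hcard : B.card ≤ ∑ j, (C j).card :=
        (Finset.card_le_card hsub).trans (Finset.card_biUnion_le.trans
          (Finset.sum_le_sum fun j _ => Finset.card_image_le))
      have : ∃ j, m ^ n < (C j).card := by
        by_contra! hcon
        have h2 : ∑ j, (C j).card ≤ ∑ _j : Fin m, m ^ n := Finset.sum_le_sum fun j _ => hcon j
        simp at h2
        rw [pow_succ, mul_comm] at hB
        omega
      obtain ⟨j, hj⟩ := this
      obtain ⟨y, hy, hyd⟩ := ih (C j) hj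
      refine ⟨fun s => F j (y s), fun s => by simpa [C] using hy s, fun s t hst => ⟨?_, ?_⟩⟩
      · intro i
        refine Fin.cases ?_ (fun i => ?_) i
        · simp only [F, Fin.cons_zero]
          refine le_trans ?_ (hD s t hst)
          have hor : ∀ q : Fin (m+1), q.succAbove j = j.castSucc ∨ q.succAbove j = j.succ := by
            intro q
            unfold Fin.succAbove
            split_ifs <;> simp
          rcases hor (p (y s)) with h1 | h1 <;> rcases hor (p (y t)) with h2 | h2 <;>
            rw [h1, h2]
          · simpa using hδ
          · exact gap j
          · rw [abs_sub_comm]; exact gap j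
          · simpa using hδ
        · simpa [F] using (hyd s t hst).1 i
      · obtain ⟨i, hi⟩ := (hyd s t hst).2
        exact ⟨i.succ, by simpa [F] using hi⟩

/-- General baton theorem: for positive reals `α_1, …, α_k` (here `α 0, …, α (k-1)`),
there exist `m` and a set `A ⊆ ℝ` of size `m+1` such that every `B ⊆ A^n` with
`|B| > m^n` contains an isometric copy of the baton `B(α_1, …, α_k)`:
points `y^0, …, y^k` with `‖y^s - y^t‖_∞ = α_{s+1} + ⋯ + α_t` for `s < t`. -/
theorem stmt_7 (k : ℕ) (hk : 0 < k) (α : ℕ → ℝ) (hα : ∀ i < k, 0 < α i) :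
    ∃ (m : ℕ) (A : Finset ℝ), 0 < m ∧ A.card = m + 1 ∧
      ∀ n : ℕ, 0 < n → ∀ B : Finset (Fin n → ℝ),
        (∀ x ∈ B, ∀ i : Fin n, x i ∈ A) → B.card > m ^ n →
        ∃ y : Fin (k + 1) → (Fin n → ℝ), (∀ s, y s ∈ B) ∧
          ∀ s t : Fin (k + 1), s < t →
            dist (y s) (y t) = ∑ i ∈ Finset.Ico (s : ℕ) (t : ℕ), α i := by
  classical
  -- minimal gap
  obtain ⟨i₀, hi₀, hmin⟩ := Finset.exists_min_image (Finset.range k) α ⟨0, by simpa using hk⟩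
  set δ := α i₀ with hδdef
  have hδ : 0 < δ := hα _ (by simpa using hi₀)
  let S : ℕ → ℝ := fun s => ∑ i ∈ Finset.range s, α i
  have hSdiff : ∀ s t, s ≤ t → S t - S s = ∑ i ∈ Finset.Ico s t, α i := fun s t h =>
    (Finset.sum_Ico_eq_sub _ h).symm
  have hgapS : ∀ s t, s < t → t ≤ k → δ ≤ S t - S s := by
    intro s t hst htk
    rw [hSdiff s t hst.le]
    refine le_trans (hmin s (by simp; omega)) ?_
    refine Finset.single_le_sum (f := α) (fun i hi => ?_) (by simp [hst])
    simp at hi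
    exact (hα i (by omega)).le
  have hSk : ∀ s, s ≤ k → S s ≤ S k := by
    intro s hs
    rcases hs.eq_or_lt with rfl | h
    · exact le_rfl
    · linarith [hgapS s k h le_rfl]
  have hS0 : ∀ s, s ≤ k → 0 ≤ S s := fun s hs =>
    Finset.sum_nonneg fun i hi => (hα i (by simp at hi; omega)).le
  let K := ⌈S k / δ⌉₊
  have hK : S k ≤ K * δ := by
    have := Nat.le_ceil (S k / δ)
    rwa [div_le_iff₀ hδ] at this
  let A : Finset ℝ := (Finset.range (k+1)).image S ∪ (Finset.range (K+1)).image (fun j : ℕ => (j:ℝ) * δ)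
  have hSA : ∀ s, s ≤ k → S s ∈ A := by
    intro s hs
    refine Finset.mem_union_left _ (Finset.mem_image_of_mem _ ?_)
    simp; omega
  have hjA : ∀ j : ℕ, j ≤ K → (j:ℝ) * δ ∈ A := by
    intro j hj
    refine Finset.mem_union_right _ (Finset.mem_image.2 ⟨j, ?_, rfl⟩)
    simp; omega
  have hAb : ∀ x ∈ A, 0 ≤ x ∧ x ≤ K * δ := by
    intro x hx
    rcases Finset.mem_union.1 hx with h | h
    · obtain ⟨s, hs, rfl⟩ := Finset.mem_image.1 h
      simp at hs
      exact ⟨hS0 s (by omega), (hSk s (by omega)).trans hK⟩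
    · obtain ⟨j, hj, rfl⟩ := Finset.mem_image.1 h
      simp at hj
      refine ⟨by positivity, mul_le_mul_of_nonneg_right ?_ hδ.le⟩
      exact_mod_cast (by omega : j ≤ K)
  have hnext : ∀ x ∈ A, ∀ z ∈ A, x < z → ∃ w ∈ A, x < w ∧ w ≤ x + δ := by
    intro x hx z hz hxz
    have hx0 := (hAb x hx).1
    have hxK : x < K * δ := hxz.trans_le (hAb z hz).2
    have h1 : ⌊x/δ⌋₊ < K := by
      rw [Nat.floor_lt (by positivity), div_lt_iff₀ hδ]; exact hxK
    refine ⟨((⌊x/δ⌋₊ + 1 : ℕ) : ℝ) * δ, hjA _ h1, ?_, ?_⟩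
    · have := Nat.lt_floor_add_one (x/δ)
      rw [div_lt_iff₀ hδ] at this
      push_cast; exact this
    · have := Nat.floor_le (a := x/δ) (by positivity)
      rw [le_div_iff₀ hδ] at this
      push_cast; linarith
  have hcard : 1 < A.card := by
    refine Finset.one_lt_card.2 ⟨S 0, hSA 0 (by omega), S k, hSA k le_rfl, ?_⟩
    have := hgapS 0 k hk le_rfl
    intro h; linarith
  obtain ⟨m, hm⟩ : ∃ m, A.card = m + 1 := ⟨A.card - 1, by omega⟩
  refine ⟨m, A, by omega, hm, ?_⟩
  intro n _ B hBA hB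
  let a := A.orderEmbOfFin hm
  have haA : ∀ i, a i ∈ A := fun i => A.orderEmbOfFin_mem hm i
  have hsurj : ∀ x ∈ A, ∃ i, a i = x := by
    intro x hx
    have : x ∈ Set.range a := by
      rw [Finset.range_orderEmbOfFin]; exact hx
    exact this
  have gap : ∀ j : Fin m, |a j.castSucc - a j.succ| ≤ δ := by
    intro j
    have hlt : a j.castSucc < a j.succ := a.strictMono Fin.castSucc_lt_succ
    obtain ⟨w, hw, h1, h2⟩ := hnext _ (haA j.castSucc) _ (haA j.succ) hlt
    obtain ⟨i, rfl⟩ := hsurj w hw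
    have h3 : j.castSucc < i := a.lt_iff_lt.1 h1
    have h4 : a j.succ ≤ a i := a.monotone (Fin.castSucc_lt_iff_succ_le.1 h3)
    rw [abs_sub_comm, abs_of_pos (by linarith)]
    linarith
  have hσ : ∀ s : Fin (k+1), ∃ i, a i = S s := fun s => hsurj _ (hSA s (by omega))
  choose σ hσ using hσ
  have hval : ∀ s t : Fin (k+1), s < t → |a (σ s) - a (σ t)| = S t - S s := by
    intro s t hst
    rw [hσ, hσ, abs_sub_comm, abs_of_nonneg]
    linarith [hgapS s t hst (by omega)]
  let G : (Fin n → Fin (m+1)) → (Fin n → ℝ) := fun x i => a (x i)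
  let B' : Finset (Fin n → Fin (m+1)) := Finset.univ.filter (fun x => G x ∈ B)
  have hBB : B ⊆ B'.image G := by
    intro x hx
    choose z hz using fun i => hsurj (x i) (hBA x hx i)
    have hG : G z = x := funext hz
    exact Finset.mem_image.2 ⟨z, by simp [B', hG, hx], hG⟩
  have hB' : m ^ n < B'.card :=
    lt_of_lt_of_le hB ((Finset.card_le_card hBB).trans Finset.card_image_le)
  obtain ⟨y, hy, hyd⟩ := baton_core m k a δ gap hδ.le σ
    (fun s t hst => by rw [hval s t hst]; exact hgapS s t hst (by omega)) n B' hB'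
  refine ⟨fun s => G (y s), fun s => by simpa [B'] using hy s, fun s t hst => ?_⟩
  obtain ⟨h1, i, hi⟩ := hyd s t hst
  rw [← hSdiff s t hst.le, ← hval s t hst]
  apply le_antisymm
  · exact (dist_pi_le_iff (abs_nonneg _)).2 fun i => by rw [Real.dist_eq]; exact h1 i
  · rw [← hi, ← Real.dist_eq]
    exact dist_le_pi_dist (G (y s)) (G (y t)) i
end

section
/- Every baton B(α_1,...,α_k) with positive real α_i is exponentially ℓ∞-Ramsey: there exists a constant χ > 1 such that χ(R^n_∞; B(α_1,...,α_k)) ≥ (χ + o(1))^n as n → ∞. -/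
lemma layer_bound {X : Type*} [DecidableEq X] (T : ℕ → Finset X) (F m : ℕ)
    (hU : ∀ i < m, (T i ∪ T (i + 1)).card ≤ F)
    (hI : ∀ p, ¬ ∀ i ≤ m, p ∈ T i) :
    ∑ i ∈ Finset.range (m + 1), (T i).card ≤ m * F := by
  have hsub : T 0 ⊆ (Finset.range m).biUnion (fun i => T i \ T (i + 1)) := by
    intro p hp
    by_contra hcon
    simp only [Finset.mem_biUnion, Finset.mem_range, Finset.mem_sdiff, not_exists, not_and,
      not_not] at hcon
    apply hI p
    intro i
    induction i with
    | zero => intro _; exact hp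
    | succ j ih => intro hj; exact hcon j (by omega) (ih (by omega))
  have h1 : (T 0).card ≤ ∑ i ∈ Finset.range m, (T i \ T (i + 1)).card :=
    (Finset.card_le_card hsub).trans Finset.card_biUnion_le
  rw [Finset.sum_range_succ']
  calc ∑ i ∈ Finset.range m, (T (i + 1)).card + (T 0).card
      ≤ ∑ i ∈ Finset.range m, (T (i + 1)).card +
          ∑ i ∈ Finset.range m, (T i \ T (i + 1)).card := by omega
    _ = ∑ i ∈ Finset.range m, (T i ∪ T (i + 1)).card := by
        rw [← Finset.sum_add_distrib]
        refine Finset.sum_congr rfl fun i _ => ?_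
        have := Finset.card_sdiff_add_card (T i) (T (i + 1))
        omega
    _ ≤ ∑ _i ∈ Finset.range m, F := Finset.sum_le_sum fun i hi => hU i (Finset.mem_range.1 hi)
    _ = m * F := by simp

lemma exists_baton (k m : ℕ) (α a : ℕ → ℝ) (hα : ∀ i < k, 0 < α i)
    (b : Fin (k + 1) → Fin (m + 1))
    (hb : ∀ s t : Fin (k + 1), s < t →
      dist (a (b s)) (a (b t)) = ∑ i ∈ Finset.Ico (s : ℕ) (t : ℕ), α i)
    (hstep : ∀ i < m, ∀ j < k, dist (a i) (a (i + 1)) ≤ α j) (n : ℕ) :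
    ∀ S : Finset (Fin n → Fin (m + 1)), m ^ n < S.card →
      ∃ y : Fin (k + 1) → Fin n → Fin (m + 1), (∀ s, y s ∈ S) ∧
        ∀ s t : Fin (k + 1), s < t →
          dist (fun i => a (y s i)) (fun i => a (y t i)) =
            ∑ i ∈ Finset.Ico (s : ℕ) (t : ℕ), α i := by
  have hpos : ∀ s t : Fin (k + 1), s < t → ∀ j, (s : ℕ) ≤ j → j < (t : ℕ) →
      α j ≤ ∑ i ∈ Finset.Ico (s : ℕ) (t : ℕ), α i := by
    intro s t hst j hj1 hj2
    refine Finset.single_le_sum (f := α) (fun i hi => (hα i ?_).le) (Finset.mem_Ico.2 ⟨hj1, hj2⟩)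
    have := (Finset.mem_Ico.1 hi).2
    omega
  induction n with
  | zero =>
    intro S hS
    have := Finset.card_le_univ S
    simp at this hS
    omega
  | succ n ih =>
    intro S hS
    by_contra hno
    let T : ℕ → Finset (Fin n → Fin (m + 1)) := fun i =>
      Finset.univ.filter (fun p => (Fin.cons (Fin.ofNat (m + 1) i) p : Fin (n + 1) → Fin (m + 1)) ∈ S)
    have hT : ∀ i p, p ∈ T i ↔
        (Fin.cons (Fin.ofNat (m + 1) i) p : Fin (n + 1) → Fin (m + 1)) ∈ S := by
      intro i p; simp [T]
    have hval : ∀ i ≤ m, ((Fin.ofNat (m + 1) i : Fin (m + 1)) : ℕ) = i := by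
      intro i hi
      simp [Fin.ofNat, Nat.mod_eq_of_lt (Nat.lt_succ_of_le hi)]
    have hcons : ∀ (u v : Fin (m + 1)) (p q : Fin n → Fin (m + 1)) (r : ℝ), 0 ≤ r →
        (dist (fun i => a ((Fin.cons u p : Fin (n + 1) → Fin (m + 1)) i))
          (fun i => a ((Fin.cons v q : Fin (n + 1) → Fin (m + 1)) i)) ≤ r ↔
        dist (a u) (a v) ≤ r ∧ dist (fun i => a (p i)) (fun i => a (q i)) ≤ r) := by
      intro u v p q r hr
      rw [dist_pi_le_iff hr, dist_pi_le_iff hr, Fin.forall_fin_succ]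
      simp
    have hcard : S.card = ∑ i ∈ Finset.range (m + 1), (T i).card := by
      rw [← Fin.sum_univ_eq_sum_range (fun i => (T i).card) (m + 1),
        Finset.card_eq_sum_card_fiberwise (f := fun x : Fin (n + 1) → Fin (m + 1) => x 0)
          (t := Finset.univ) (fun _ _ => by simp)]
      refine Finset.sum_congr rfl fun u _ => ?_
      have hu : Fin.ofNat (m + 1) (u : ℕ) = u := Fin.ext (hval u (by omega))
      refine Finset.card_bij' (fun x _ => Fin.tail x) (fun p _ => Fin.cons u p) ?_ ?_ ?_ ?_
      · intro x hx
        obtain ⟨h1, h2⟩ := Finset.mem_filter.1 hx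
        rw [hT, hu, ← h2]
        simpa [Fin.cons_self_tail] using h1
      · intro p hp
        rw [hT, hu] at hp
        simp [hp]
      · intro x hx
        obtain ⟨h1, h2⟩ := Finset.mem_filter.1 hx
        simp only [← h2]
        exact Fin.cons_self_tail x
      · intro p hp
        simp
    have := layer_bound T (m ^ n) m ?_ ?_
    · rw [← hcard] at this
      rw [pow_succ, mul_comm] at hS
      omega
    · intro i hi
      by_contra hlt
      obtain ⟨y, hy, hd⟩ := ih _ (not_le.1 hlt)
      apply hno
      have hch : ∀ s, ∃ e : ℕ, (e = i ∨ e = i + 1) ∧ y s ∈ T e := by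
        intro s
        rcases Finset.mem_union.1 (hy s) with h | h
        · exact ⟨i, Or.inl rfl, h⟩
        · exact ⟨i + 1, Or.inr rfl, h⟩
      choose e he hye using hch
      refine ⟨fun s => Fin.cons (Fin.ofNat (m + 1) (e s)) (y s), fun s => (hT _ _).1 (hye s), ?_⟩
      intro s t hst
      have hsk : (s : ℕ) < k := by omega
      have hge := hpos s t hst s le_rfl hst
      have h0 := (hα s hsk).le.trans hge
      apply le_antisymm
      · rw [hcons _ _ _ _ _ h0]
        refine ⟨?_, (hd s t hst).le⟩
        rw [hval _ (by rcases he s with h | h <;> omega),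
          hval _ (by rcases he t with h | h <;> omega)]
        have h1 := (hstep i hi s hsk).trans hge
        rcases he s with h | h <;> rcases he t with h' | h' <;> rw [h, h']
        · simpa using h0
        · exact h1
        · rw [dist_comm]; exact h1
        · simpa using h0
      · rw [← hd s t hst]
        exact ((hcons _ _ _ _ _ dist_nonneg).1 le_rfl).2
    · intro p hp
      apply hno
      refine ⟨fun s => Fin.cons (b s) p, fun s => ?_, ?_⟩
      · have h1 := (hT _ _).1 (hp (b s) (by omega))
        have hu : Fin.ofNat (m + 1) (b s : ℕ) = b s := Fin.ext (hval (b s) (by omega))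
        rwa [hu] at h1
      · intro s t hst
        have h0 : 0 ≤ ∑ i ∈ Finset.Ico (s : ℕ) (t : ℕ), α i := by
          rw [← hb s t hst]; exact dist_nonneg
        apply le_antisymm
        · rw [hcons _ _ _ _ _ h0]
          exact ⟨(hb s t hst).le, by simpa using h0⟩
        · rw [← hb s t hst]
          exact ((hcons _ _ _ _ _ dist_nonneg).1 le_rfl).1

/-- Every baton `B(α_1, …, α_k)` is exponentially `ℓ∞`-Ramsey: there are `χ > 1`
and `δ(n) → 0` such that any coloring of `ℝ^n` (max metric) with fewer than
`(χ + δ n)^n` colors contains a monochromatic isometric copy of the baton. -/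
theorem stmt_8 (k : ℕ) (hk : 0 < k) (α : ℕ → ℝ) (hα : ∀ i < k, 0 < α i) :
    ∃ χ : ℝ, 1 < χ ∧ ∃ δ : ℕ → ℝ,
      Filter.Tendsto δ Filter.atTop (nhds 0) ∧
      ∀ n : ℕ, 0 < n → ∀ N : ℕ, (N : ℝ) < (χ + δ n) ^ n →
        ∀ c : (Fin n → ℝ) → Fin N,
          ∃ y : Fin (k + 1) → (Fin n → ℝ),
            (∀ s t : Fin (k + 1), c (y s) = c (y t)) ∧
            ∀ s t : Fin (k + 1), s < t →
              dist (y s) (y t) = ∑ i ∈ Finset.Ico (s : ℕ) (t : ℕ), α i := by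
  have hne : (Finset.range k).Nonempty := ⟨0, Finset.mem_range.2 hk⟩
  obtain ⟨lo, hlo, hlo'⟩ := Finset.exists_min_image (Finset.range k) α hne
  obtain ⟨hi, hhi, hhi'⟩ := Finset.exists_max_image (Finset.range k) α hne
  simp only [Finset.mem_range] at hlo hlo' hhi hhi'
  have hlop := hα lo hlo
  obtain ⟨M, hM⟩ := exists_nat_gt (α hi / α lo)
  have hMpos : (0 : ℝ) < M := lt_trans (div_pos (hα hi hhi) hlop) hM
  have hMn : 0 < M := by exact_mod_cast hMpos
  let a : ℕ → ℝ := fun i => ∑ t ∈ Finset.range i, α (t / M) / M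
  have ha : ∀ j, a (j * M) = ∑ i ∈ Finset.range j, α i := by
    intro j
    induction j with
    | zero => simp [a]
    | succ j ih =>
      have h1 : a ((j + 1) * M) = a (j * M) + ∑ t ∈ Finset.range M, α ((j * M + t) / M) / M := by
        simp only [a]
        rw [add_mul, one_mul, Finset.sum_range_add]
      rw [h1, ih, Finset.sum_range_succ]
      congr 1
      have h2 : ∀ t ∈ Finset.range M, α ((j * M + t) / M) / M = α j / M := by
        intro t ht
        rw [mul_comm, Nat.mul_add_div hMn, Nat.div_eq_of_lt (Finset.mem_range.1 ht), add_zero]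
      rw [Finset.sum_congr rfl h2, Finset.sum_const, Finset.card_range, nsmul_eq_mul]
      field_simp
  obtain ⟨m, hm⟩ : ∃ m, m = k * M := ⟨_, rfl⟩
  have hmpos : 0 < m := hm ▸ Nat.mul_pos hk hMn
  have hmR : (0 : ℝ) < m := by exact_mod_cast hmpos
  have hstep : ∀ i < m, ∀ j < k, dist (a i) (a (i + 1)) ≤ α j := by
    intro i him j hj
    have hik : i / M < k := Nat.div_lt_of_lt_mul (by rw [mul_comm, ← hm]; exact him)
    have h1 : a (i + 1) = a i + α (i / M) / M := by simp only [a]; rw [Finset.sum_range_succ]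
    rw [h1, dist_self_add_right, Real.norm_eq_abs, abs_of_pos (div_pos (hα _ hik) hMpos),
      div_le_iff₀ hMpos]
    rw [div_lt_iff₀ hlop] at hM
    have h2 := hhi' _ hik
    have h3 := mul_le_mul_of_nonneg_left (hlo' _ hj) hMpos.le
    linarith
  let b : Fin (k + 1) → Fin (m + 1) := fun s => ⟨s * M, by
    have : (s : ℕ) * M ≤ k * M := Nat.mul_le_mul_right _ (by omega)
    omega⟩
  have hb : ∀ s t : Fin (k + 1), s < t →
      dist (a (b s)) (a (b t)) = ∑ i ∈ Finset.Ico (s : ℕ) (t : ℕ), α i := by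
    intro s t hst
    have hle : (s : ℕ) ≤ t := hst.le
    simp only [b, ha]
    rw [Finset.sum_Ico_eq_sub _ hle, dist_comm, Real.dist_eq, abs_of_nonneg]
    rw [← Finset.sum_Ico_eq_sub _ hle]
    refine Finset.sum_nonneg fun i hi => (hα i ?_).le
    have := (Finset.mem_Ico.1 hi).2
    omega
  refine ⟨(m + 1) / m, by rw [lt_div_iff₀ hmR]; linarith, fun _ => 0, tendsto_const_nhds, ?_⟩
  intro n _ N hN c
  rw [add_zero, div_pow, lt_div_iff₀ (pow_pos hmR n)] at hN
  have hN' : N * m ^ n < (m + 1) ^ n := by exact_mod_cast hN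
  obtain ⟨col, -, hcol⟩ := Finset.exists_lt_card_fiber_of_mul_lt_card_of_maps_to
    (s := (Finset.univ : Finset (Fin n → Fin (m + 1)))) (t := (Finset.univ : Finset (Fin N)))
    (f := fun x => c (fun i => a (x i))) (n := m ^ n) (fun _ _ => Finset.mem_univ _)
    (by simpa using hN')
  obtain ⟨y, hy, hd⟩ := exists_baton k m α a hα b hb hstep n _ hcol
  refine ⟨fun s i => a (y s i), fun s t => ?_, hd⟩
  exact (Finset.mem_filter.1 (hy s)).2.trans (Finset.mem_filter.1 (hy t)).2.symm
end

section
/- Let d and l be positive integers with l < d and set m = d + l. Let C = [0, d)^n and 𝒞 = ⋃_{v∈Z^n}(C + m v). Then there exists a set of at most n·(log d)·(m/d)^n + (m/d)^n + 1 translates of 𝒞 whose union is all of R^n. Consequently, if M is a finite metric space with at least 2 points, integer diameter d(M) = d and integer connectivity radius l(M) = l, then χ(R^n_∞; M) ≤ (1+o(1))·n·log d·(1 + l/d)^n. -/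
lemma aux_avg {G : Type*} [AddCommGroup G] [Fintype G] [DecidableEq G] (C U : Finset G) :
    ∃ t : G, U.card * C.card ≤ Fintype.card G * (U.filter (fun u => u - t ∈ C)).card := by
  have hsum : ∑ t : G, (U.filter (fun u => u - t ∈ C)).card = U.card * C.card := by
    simp only [Finset.card_filter]
    rw [Finset.sum_comm]
    have : ∀ u ∈ U, ∑ t : G, (if u - t ∈ C then 1 else 0) = C.card := by
      intro u _
      rw [Fintype.sum_equiv (Equiv.subLeft u) (fun t => if u - t ∈ C then 1 else 0)
        (fun g => if g ∈ C then 1 else 0) (fun t => by simp)]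
      simp
    rw [Finset.sum_congr rfl this]
    simp
  by_contra! h
  have h2 : ∑ t : G, Fintype.card G * (U.filter (fun u => u - t ∈ C)).card
      < ∑ _t : G, U.card * C.card :=
    Finset.sum_lt_sum_of_nonempty ⟨0, Finset.mem_univ _⟩ (fun t _ => h t)
  rw [← Finset.mul_sum, hsum] at h2
  simp at h2

lemma aux_greedy {G : Type*} [AddCommGroup G] [Fintype G] [DecidableEq G] (C : Finset G) (s : ℕ) :
    ∃ T : Finset G, T.card ≤ s ∧
      ((Finset.univ.filter (fun u : G => ∀ t ∈ T, u - t ∉ C)).card : ℝ) ≤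
        Fintype.card G * (1 - (C.card : ℝ) / Fintype.card G) ^ s := by
  have hG : (0 : ℝ) < Fintype.card G := by exact_mod_cast Fintype.card_pos
  have hC : (C.card : ℝ) ≤ Fintype.card G := by exact_mod_cast Finset.card_le_univ C
  induction s with
  | zero => exact ⟨∅, by simp⟩
  | succ s ih =>
    obtain ⟨T, hT, hU⟩ := ih
    set U := Finset.univ.filter (fun u : G => ∀ t ∈ T, u - t ∉ C) with hUdef
    obtain ⟨t, ht⟩ := aux_avg C U
    refine ⟨insert t T, (Finset.card_insert_le _ _).trans (by omega), ?_⟩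
    have e : Finset.univ.filter (fun u : G => ∀ t' ∈ insert t T, u - t' ∉ C)
        = U.filter (fun u => ¬ (u - t ∈ C)) := by
      ext u
      simp [hUdef, and_comm]
    rw [e]
    have hs := Finset.card_filter_add_card_filter_not (s := U) (fun u => u - t ∈ C)
    have hs' : ((U.filter (fun u => u - t ∈ C)).card : ℝ)
      + ((U.filter (fun u => ¬ (u - t ∈ C))).card : ℝ) = U.card := by exact_mod_cast hs
    have ht' : (U.card : ℝ) * C.card ≤ Fintype.card G * (U.filter (fun u => u - t ∈ C)).card := by
      exact_mod_cast ht
    have h1 : (U.card : ℝ) * ((C.card : ℝ) / Fintype.card G) ≤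
        (U.filter (fun u => u - t ∈ C)).card := by
      rw [← mul_div_assoc, div_le_iff₀ hG]
      linarith
    have hp : 0 ≤ 1 - (C.card : ℝ) / Fintype.card G := by
      rw [sub_nonneg, div_le_one hG]; exact hC
    calc ((U.filter (fun u => ¬ (u - t ∈ C))).card : ℝ)
        ≤ U.card * (1 - (C.card : ℝ) / Fintype.card G) := by linarith
      _ ≤ (Fintype.card G * (1 - (C.card : ℝ) / Fintype.card G) ^ s)
          * (1 - (C.card : ℝ) / Fintype.card G) := by gcongr
      _ = _ := by ring

lemma aux_cover {G : Type*} [AddCommGroup G] [Fintype G] [DecidableEq G] (C : Finset G)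
    (h0 : (0 : G) ∈ C) (s : ℕ) :
    ∃ T : Finset G, (T.card : ℝ) ≤ s + Fintype.card G * (1 - (C.card : ℝ) / Fintype.card G) ^ s ∧
      ∀ u : G, ∃ t ∈ T, u - t ∈ C := by
  obtain ⟨T, hT, hU⟩ := aux_greedy C s
  refine ⟨T ∪ Finset.univ.filter (fun u : G => ∀ t ∈ T, u - t ∉ C), ?_, ?_⟩
  · have h := Finset.card_union_le T (Finset.univ.filter (fun u : G => ∀ t ∈ T, u - t ∉ C))
    have h' : ((T ∪ Finset.univ.filter (fun u : G => ∀ t ∈ T, u - t ∉ C)).card : ℝ) ≤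
      T.card + (Finset.univ.filter (fun u : G => ∀ t ∈ T, u - t ∉ C)).card := by exact_mod_cast h
    have hT' : (T.card : ℝ) ≤ s := by exact_mod_cast hT
    linarith
  · intro u
    by_cases h : ∃ t ∈ T, u - t ∈ C
    · obtain ⟨t, ht, h⟩ := h
      exact ⟨t, Finset.mem_union_left _ ht, h⟩
    · push Not at h
      exact ⟨u, Finset.mem_union_right _ (by simpa using h), by simpa using h0⟩

lemma aux_card (m d : ℕ) [NeZero m] (h : d ≤ m) :
    (Finset.univ.filter (fun a : ZMod m => a.val < d)).card = d := by
  have : (Finset.univ.filter (fun a : ZMod m => a.val < d)).card = (Finset.range d).card := by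
    apply Finset.card_bij (fun a _ => a.val)
    · intro a ha; simpa using ha
    · intro a _ b _ hab; exact ZMod.val_injective m hab
    · intro b hb
      have hb' : b < d := by simpa using hb
      have : (b : ZMod m).val = b := ZMod.val_natCast_of_lt (by omega)
      exact ⟨b, by simp [this, hb'], this⟩
  simpa using this

lemma aux_part1 (d l : ℕ) (hl : 0 < l) (hld : l < d) (n : ℕ) :
      ∃ T : Finset (Fin n → ℝ),
        ((T.card : ℝ) ≤
          (n : ℝ) * Real.log d * (((d : ℝ) + l) / d) ^ n + (((d : ℝ) + l) / d) ^ n + 1) ∧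
        ∀ x : Fin n → ℝ, ∃ t ∈ T, ∃ v : Fin n → ℤ, ∀ i : Fin n,
          ((d : ℝ) + l) * (v i : ℝ) ≤ x i - t i ∧
            x i - t i < ((d : ℝ) + l) * (v i : ℝ) + d := by
  classical
  set m : ℕ := d + l with hm
  haveI : NeZero m := ⟨by omega⟩
  have hd : (0 : ℝ) < d := by exact_mod_cast (by omega : 0 < d)
  have hmr : (d : ℝ) + l = (m : ℝ) := by rw [hm]; push_cast; ring
  have hmpos : (0 : ℝ) < m := by exact_mod_cast (by omega : 0 < m)
  rw [hmr]
  let C : Finset (Fin n → ZMod m) :=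
    Fintype.piFinset (fun _ => Finset.univ.filter (fun a : ZMod m => a.val < d))
  have hCcard : C.card = d ^ n := by
    simp [C, Fintype.card_piFinset, aux_card m d (by omega)]
  have hG : Fintype.card (Fin n → ZMod m) = m ^ n := by simp [ZMod.card]
  have h0 : (0 : Fin n → ZMod m) ∈ C := by
    simp [C, Fintype.mem_piFinset]; omega
  set L : ℝ := (n : ℝ) * Real.log d * ((m : ℝ) / d) ^ n with hL
  have hL0 : 0 ≤ L := by
    have : 0 ≤ Real.log d := Real.log_natCast_nonneg d
    positivity
  obtain ⟨T, hT, hcov⟩ := aux_cover C h0 ⌈L⌉₊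
  have hs1 : (⌈L⌉₊ : ℝ) ≤ L + 1 := (Nat.ceil_lt_add_one hL0).le
  have hs2 : L ≤ ⌈L⌉₊ := Nat.le_ceil L
  have hbound : (Fintype.card (Fin n → ZMod m) : ℝ) *
      (1 - (C.card : ℝ) / Fintype.card (Fin n → ZMod m)) ^ ⌈L⌉₊ ≤ ((m : ℝ) / d) ^ n := by
    rw [hCcard, hG]
    push_cast
    set p : ℝ := (d : ℝ) ^ n / (m : ℝ) ^ n with hp
    have hp1 : p ≤ 1 := by
      rw [hp, div_le_one (by positivity)]
      gcongr
      omega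
    have hp0 : 0 ≤ p := by positivity
    have hpL : p * L = n * Real.log d := by
      rw [hp, hL, div_pow]; field_simp
    have h1 : (1 - p) ^ ⌈L⌉₊ ≤ Real.exp (-p) ^ ⌈L⌉₊ := by
      apply pow_le_pow_left₀ (by linarith)
      have := Real.add_one_le_exp (-p)
      linarith
    have h2 : Real.exp (-p) ^ ⌈L⌉₊ ≤ ((d : ℝ) ^ n)⁻¹ := by
      rw [← Real.exp_nat_mul]
      have : Real.exp (-(n * Real.log d)) = ((d : ℝ) ^ n)⁻¹ := by
        rw [Real.exp_neg, Real.exp_nat_mul, Real.exp_log hd]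
      rw [← this]
      apply Real.exp_le_exp.mpr
      rw [← hpL]
      nlinarith
    calc (m : ℝ) ^ n * (1 - p) ^ ⌈L⌉₊ ≤ (m : ℝ) ^ n * ((d : ℝ) ^ n)⁻¹ := by
          gcongr; exact h1.trans h2
      _ = _ := by rw [div_pow, div_eq_mul_inv]
  refine ⟨T.image (fun t i => ((t i).val : ℝ)), ?_, ?_⟩
  · have : ((T.image (fun (t : Fin n → ZMod m) i => ((t i).val : ℝ))).card : ℝ) ≤ T.card := by
      exact_mod_cast Finset.card_image_le
    linarith
  · intro x
    obtain ⟨t, ht, hC⟩ := hcov (fun i => ((⌊x i⌋ : ℤ) : ZMod m))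
    refine ⟨_, Finset.mem_image_of_mem _ ht, fun i => (⌊x i⌋ - (t i).val) / (m : ℤ), ?_⟩
    intro i
    have hi : ((((⌊x i⌋ : ℤ) : ZMod m)) - t i).val < d := by
      simpa [C] using (Fintype.mem_piFinset.mp hC i)
    set k : ℤ := ⌊x i⌋ - (t i).val with hk
    have hcast : (((⌊x i⌋ : ℤ) : ZMod m)) - t i = ((k : ℤ) : ZMod m) := by
      rw [hk]; push_cast; simp
    rw [hcast] at hi
    have hv : (((k : ZMod m).val : ℕ) : ℤ) = k % m := ZMod.val_intCast k
    have hmod : k % m < d := by rw [← hv]; exact_mod_cast hi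
    have hmod0 : 0 ≤ k % m := Int.emod_nonneg _ (by have := NeZero.ne m; exact_mod_cast this)
    have hdiv := Int.mul_ediv_add_emod k m
    have e1 : (m : ℤ) * (k / m) ≤ k := by linarith
    have e2 : k + 1 ≤ (m : ℤ) * (k / m) + d := by linarith
    have e1' : (m : ℝ) * ((k / m : ℤ) : ℝ) ≤ (k : ℝ) := by exact_mod_cast e1
    have e2' : (k : ℝ) + 1 ≤ (m : ℝ) * ((k / m : ℤ) : ℝ) + d := by exact_mod_cast e2
    have hkr : (k : ℝ) = (⌊x i⌋ : ℝ) - ((t i).val : ℝ) := by rw [hk]; push_cast; ring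
    have f1 := Int.floor_le (x i)
    have f2 := Int.lt_floor_add_one (x i)
    constructor
    · linarith
    · linarith

/-- Same cube if close. -/
lemma aux_cube (d l : ℕ) (a b : ℤ) (x y : ℝ)
    (hx1 : ((d : ℝ) + l) * a ≤ x) (hx2 : x < ((d : ℝ) + l) * a + d)
    (hy1 : ((d : ℝ) + l) * b ≤ y) (hy2 : y < ((d : ℝ) + l) * b + d)
    (h : |x - y| ≤ l) : a = b := by
  have key : ∀ a b : ℤ, ∀ x y : ℝ, x < ((d : ℝ) + l) * a + d → ((d : ℝ) + l) * b ≤ y →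
      y - x ≤ l → b ≤ a := by
    intro a b x y h1 h2 h3
    by_contra! hab
    have : (a : ℝ) + 1 ≤ b := by exact_mod_cast hab
    have hm : (0 : ℝ) ≤ (d : ℝ) + l := by positivity
    nlinarith [mul_le_mul_of_nonneg_left this hm]
  have h' := abs_le.mp h
  exact le_antisymm (key b a y x hy2 hx1 (by linarith)) (key a b x y hx2 hy1 (by linarith))

/-- Covering bound and chromatic consequence. Let `l < d` be positive integers
and `m = d + l`. First, `ℝ^n` can be covered by at most
`n·log d·(m/d)^n + (m/d)^n + 1` translates of `𝒞 = ⋃_{v∈ℤ^n}([0,d)^n + m v)`.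
Consequently, every finite metric space `M` with at least two points, diameter
`d` and connectivity radius `l` satisfies
`χ(ℝ^n_∞; M) ≤ (1 + o(1))·n·log d·(1 + l/d)^n`. -/
theorem stmt_15 (d l : ℕ) (hl : 0 < l) (hld : l < d) :
    (∀ n : ℕ, 0 < n →
      ∃ T : Finset (Fin n → ℝ),
        ((T.card : ℝ) ≤
          (n : ℝ) * Real.log d * (((d : ℝ) + l) / d) ^ n + (((d : ℝ) + l) / d) ^ n + 1) ∧
        ∀ x : Fin n → ℝ, ∃ t ∈ T, ∃ v : Fin n → ℤ, ∀ i : Fin n,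
          ((d : ℝ) + l) * (v i : ℝ) ≤ x i - t i ∧
            x i - t i < ((d : ℝ) + l) * (v i : ℝ) + d) ∧
    (∀ (M : Type) [MetricSpace M] [Fintype M], 2 ≤ Fintype.card M →
      IsGreatest {r : ℝ | ∃ x y : M, dist x y = r} (d : ℝ) →
      IsLeast {l' : ℝ | 0 < l' ∧ ∀ x y : M, ∃ (t : ℕ) (z : ℕ → M),
        z 0 = x ∧ z t = y ∧ ∀ i < t, dist (z i) (z (i + 1)) ≤ l'} (l : ℝ) →
      ∃ δ : ℕ → ℝ, Filter.Tendsto δ Filter.atTop (nhds 0) ∧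
        ∀ n : ℕ, 0 < n → ∃ N : ℕ,
          (N : ℝ) ≤ (1 + δ n) * n * Real.log d * (1 + (l : ℝ) / d) ^ n ∧
          ∃ c : (Fin n → ℝ) → Fin N,
            ∀ f : M → (Fin n → ℝ),
              (∀ x y : M, dist (f x) (f y) = dist x y) →
              ∃ x y : M, c (f x) ≠ c (f y)) := by
  refine ⟨fun n _ => aux_part1 d l hl hld n, ?_⟩
  intro M _ _ _ hdiam hconn
  have hd2 : 2 ≤ d := by omega
  have hd : (0 : ℝ) < d := by exact_mod_cast (by omega : 0 < d)
  have hlog : 0 < Real.log d := Real.log_pos (by exact_mod_cast hd2)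
  refine ⟨fun n => (2 / Real.log d) / n, tendsto_const_div_atTop_nhds_zero_nat _, ?_⟩
  intro n hn
  obtain ⟨T, hT, hcov⟩ := aux_part1 d l hl hld n
  have hnr : (0 : ℝ) < n := by exact_mod_cast hn
  refine ⟨T.card, ?_, ?_⟩
  · have hq : ((d : ℝ) + l) / d = 1 + (l : ℝ) / d := by field_simp
    rw [hq] at hT
    have h1 : (1 : ℝ) ≤ (1 + (l : ℝ) / d) ^ n := one_le_pow₀ (by
      have : 0 ≤ (l : ℝ) / d := by positivity
      linarith)
    have : (1 + 2 / Real.log d / (n : ℝ)) * n * Real.log d * (1 + (l : ℝ) / d) ^ n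
        = n * Real.log d * (1 + (l : ℝ) / d) ^ n + 2 * (1 + (l : ℝ) / d) ^ n := by
      generalize (1 + (l : ℝ) / d) ^ n = Q
      field_simp
    rw [this]
    linarith
  · choose t ht v hv using hcov
    refine ⟨fun x => T.equivFin ⟨t x, ht x⟩, ?_⟩
    intro f hf
    by_contra! hmono
    have hsame : ∀ x y : M, t (f x) = t (f y) := by
      intro x y
      have := hmono x y
      simpa using this
    have hstep : ∀ x y : M, dist x y ≤ l → v (f x) = v (f y) := by
      intro x y hxy
      funext i
      have hx := hv (f x) i
      have hy := hv (f y) i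
      rw [hsame x y] at hx
      refine aux_cube d l _ _ _ _ hx.1 hx.2 hy.1 hy.2 ?_
      have h1 := dist_le_pi_dist (f x) (f y) i
      rw [hf, Real.dist_eq] at h1
      have e : f x i - t (f y) i - (f y i - t (f y) i) = f x i - f y i := by ring
      rw [e]
      exact h1.trans hxy
    have hall : ∀ x y : M, v (f x) = v (f y) := by
      intro x y
      obtain ⟨k, z, hz0, hzk, hz⟩ := hconn.1.2 x y
      have : ∀ j, j ≤ k → v (f (z 0)) = v (f (z j)) := by
        intro j
        induction j with
        | zero => intro _; rfl
        | succ j ih =>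
          intro hj
          exact (ih (by omega)).trans (hstep _ _ (hz j (by omega)))
      have h := this k le_rfl
      rwa [hz0, hzk] at h
    obtain ⟨x, y, hxy⟩ := hdiam.1
    have hlt : dist (f x) (f y) < d := by
      rw [dist_pi_lt_iff hd]
      intro i
      have hx := hv (f x) i
      have hy := hv (f y) i
      rw [hsame x y, hall x y] at hx
      rw [Real.dist_eq, abs_lt]
      constructor <;> linarith [hx.1, hx.2, hy.1, hy.2]
    rw [hf, hxy] at hlt
    exact lt_irrefl _ hlt
end
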